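/- Let C be a meet entropy space and λ : C → C a positively expansive morphism with positive generator α ∈ C. Then h(λ) = h(λ, α). -/

import Mathlib

open Filter ENNReal Topology

/-- An *entropy space*: a pre-ordered semigroup `(C, ≺, ∧)` satisfying (C1) and (C2),
together with an entropy function `h : C → [0,∞]` satisfying (H1) and (H2). -/
structure EntropySpace (C : Type*) where
  prec : C → C → Prop
  meet : C → C → C
  h : C → ℝ≥0∞
  prec_refl : ∀ a, prec a a
  prec_trans : ∀ a b c, prec a b → prec b c → prec a c
  meet_assoc : ∀ a b c, meet (meet a b) c = meet a (meet b c)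
  c1_left : ∀ a b, prec (meet a b) a
  c1_right : ∀ a b, prec (meet a b) b
  c2 : ∀ a a' b b', prec a a' → prec b b' → prec (meet a b) (meet a' b')
  h1 : ∀ a b, prec a b → h b ≤ h a
  h2 : ∀ a b, h (meet a b) ≤ h a + h b

variable {C : Type*}

/-- `α_0^n[λ] = α ∧ λα ∧ ⋯ ∧ λ^n α` (a product of `n + 1` factors). -/
def EntropySpace.orbitProd (E : EntropySpace C) (l : C → C) (a : C) : ℕ → C
  | 0 => a
  | n + 1 => E.meet (E.orbitProd l a n) (l^[n + 1] a)

/-- `h(λ, α) = limsup_{n → ∞} (1/n) · h(α_0^{n-1}[λ])`, computed in `[0,∞]`. -/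
noncomputable def EntropySpace.relEntropy (E : EntropySpace C) (l : C → C) (a : C) : ℝ≥0∞ :=
  Filter.atTop.limsup fun n : ℕ => E.h (E.orbitProd l a n) / ((n : ℝ≥0∞) + 1)

/-- `h(λ) = sup_{α ∈ C} h(λ, α)`. -/
noncomputable def EntropySpace.entropy (E : EntropySpace C) (l : C → C) : ℝ≥0∞ :=
  ⨆ a : C, E.relEntropy l a

/-!
If `λ` preserves `∧` up to `∼`, then `α_0^{m+1} ≺ λ(α_0^m)`. Hence `α_0^m ≺ β` implies
`α_0^{m+n} ≺ λ^n β` for every `n`, and taking greatest lower bounds gives `α_0^{m+n} ≺ β_0^n`.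
So `h(β_0^n) ≤ h(α_0^{m+n})`, and as `m` is fixed the shift does not affect the growth rate:
`h(λ, β) ≤ h(λ, α)`. A positive generator provides such an `m` for every `β`.
-/

theorem limsup_mul_of_tendsto {ι : Type*} {f : Filter ι} [f.NeBot] {u v : ι → ℝ≥0∞} {c : ℝ≥0∞}
    (hc₀ : c ≠ 0) (hc : c ≠ ∞) (hv : Tendsto v f (𝓝 c)) :
    limsup (u * v) f = limsup u f * c := by
  apply le_antisymm
  · have hle := ENNReal.limsup_mul_le' (u := u) (v := v) (f := f)
    rw [hv.limsup_eq] at hle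
    exact hle (.inr hc) (.inr hc₀)
  · have hge := ENNReal.le_limsup_mul (u := u) (v := v) (f := f)
    rwa [hv.liminf_eq] at hge

theorem tendsto_natCast_add_div_natCast {c : ℝ≥0∞} (hc : c ≠ ∞) :
    Tendsto (fun n : ℕ ↦ (n + c) / n) atTop (𝓝 1) := by
  have hdiv : Tendsto (fun n : ℕ ↦ 1 + c / n) atTop (𝓝 1) := by
    simpa using (ENNReal.Tendsto.const_div ENNReal.tendsto_nat_nhds_top (.inr hc)).const_add 1
  refine hdiv.congr' ?_
  filter_upwards [eventually_ne_atTop 0] with n hn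
  rw [ENNReal.add_div, ENNReal.div_self (Nat.cast_ne_zero.mpr hn) (natCast_ne_top n)]

theorem limsup_natAdd_div_add_one (u : ℕ → ℝ≥0∞) (m : ℕ) :
    limsup (fun n : ℕ ↦ u (n + m) / (n + 1)) atTop = limsup (fun n : ℕ ↦ u n / (n + 1)) atTop := by
  have hratio : Tendsto (fun n : ℕ ↦ (((n + m : ℕ) : ℝ≥0∞) + 1) / (n + 1)) atTop (𝓝 1) := by
    refine ((tendsto_natCast_add_div_natCast (natCast_ne_top m)).comp
      (tendsto_add_atTop_nat 1)).congr fun n ↦ ?_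
    simp only [Function.comp_apply, Nat.cast_add, Nat.cast_one, add_right_comm]
  calc limsup (fun n : ℕ ↦ u (n + m) / (n + 1)) atTop
    _ = limsup (fun n : ℕ ↦
          u (n + m) / ((n + m : ℕ) + 1) * ((((n + m : ℕ) : ℝ≥0∞) + 1) / (n + 1))) atTop := by
        congr! 2 with n
        rw [← mul_div_assoc, ENNReal.div_mul_cancel (by simp) (by finiteness)]
    _ = limsup (fun n : ℕ ↦ u (n + m) / ((n + m : ℕ) + 1)) atTop :=
        (limsup_mul_of_tendsto one_ne_zero one_ne_top hratio).trans (mul_one _)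
    _ = limsup (fun n : ℕ ↦ u n / (n + 1)) atTop :=
        limsup_nat_add (fun n : ℕ ↦ u n / ((n : ℝ≥0∞) + 1)) m

namespace EntropySpace

variable {E : EntropySpace C} {l : C → C} {a b : C} {m : ℕ}

theorem orbitProd_succ_prec_map_orbitProd
    (hmap : ∀ a b, E.prec (E.meet (l a) (l b)) (l (E.meet a b))) (a : C) (m : ℕ) :
    E.prec (E.orbitProd l a (m + 1)) (l (E.orbitProd l a m)) := by
  induction m with
  | zero => exact E.c1_right _ _
  | succ m ih =>
    have hlast : E.prec (l^[m + 2] a) (l (l^[m + 1] a)) := by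
      rw [Function.iterate_succ_apply' l (m + 1)]
      exact E.prec_refl _
    exact E.prec_trans _ _ _ (E.c2 _ _ _ _ ih hlast) (hmap _ _)

theorem orbitProd_add_prec_iterate (hmono : ∀ a b, E.prec a b → E.prec (l a) (l b))
    (hmap : ∀ a b, E.prec (E.meet (l a) (l b)) (l (E.meet a b)))
    (hab : E.prec (E.orbitProd l a m) b) (n : ℕ) :
    E.prec (E.orbitProd l a (n + m)) (l^[n] b) := by
  induction n with
  | zero => rwa [Nat.zero_add]
  | succ n ih =>
    rw [Nat.succ_add, Function.iterate_succ_apply']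
    exact E.prec_trans _ _ _ (orbitProd_succ_prec_map_orbitProd hmap a (n + m)) (hmono _ _ ih)

theorem orbitProd_add_prec_orbitProd
    (hmeet : ∀ a b c, E.prec c a → E.prec c b → E.prec c (E.meet a b))
    (hmono : ∀ a b, E.prec a b → E.prec (l a) (l b))
    (hmap : ∀ a b, E.prec (E.meet (l a) (l b)) (l (E.meet a b)))
    (hab : E.prec (E.orbitProd l a m) b) (n : ℕ) :
    E.prec (E.orbitProd l a (n + m)) (E.orbitProd l b n) := by
  induction n with
  | zero => rwa [Nat.zero_add]
  | succ n ih =>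
    have hprev : E.prec (E.orbitProd l a (n + 1 + m)) (E.orbitProd l b n) := by
      rw [Nat.succ_add]
      exact E.prec_trans _ _ _ (E.c1_left _ _) ih
    exact hmeet _ _ _ hprev (orbitProd_add_prec_iterate hmono hmap hab (n + 1))

theorem relEntropy_le_of_orbitProd_prec
    (hmeet : ∀ a b c, E.prec c a → E.prec c b → E.prec c (E.meet a b))
    (hmono : ∀ a b, E.prec a b → E.prec (l a) (l b))
    (hmap : ∀ a b, E.prec (E.meet (l a) (l b)) (l (E.meet a b)))
    (hab : E.prec (E.orbitProd l a m) b) :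
    E.relEntropy l b ≤ E.relEntropy l a := by
  calc E.relEntropy l b
    _ ≤ limsup (fun n : ℕ ↦ E.h (E.orbitProd l a (n + m)) / ((n : ℝ≥0∞) + 1)) atTop := by
        refine limsup_le_limsup (.of_forall fun n ↦ ENNReal.div_le_div_right ?_ _)
        exact E.h1 _ _ (orbitProd_add_prec_orbitProd hmeet hmono hmap hab n)
    _ = E.relEntropy l a := limsup_natAdd_div_add_one (fun n ↦ E.h (E.orbitProd l a n)) m

end EntropySpace

/-- If `C` is a meet entropy space and `λ` is a positively expansive morphism with
positive generator `α`, then `h(λ) = h(λ, α)`. -/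
theorem stmt_11 (E : EntropySpace C)
    (hmeet : ∀ a b c, E.prec c a → E.prec c b → E.prec c (E.meet a b))
    (l : C → C)
    (hmono : ∀ a b, E.prec a b → E.prec (l a) (l b))
    (hm1 : ∀ a b, E.prec (l (E.meet a b)) (E.meet (l a) (l b)) ∧
      E.prec (E.meet (l a) (l b)) (l (E.meet a b)))
    (α : C)
    (hgen : ∀ b : C, ∃ m : ℕ, E.prec (E.orbitProd l α m) b) :
    E.entropy l = E.relEntropy l α := by
  refine le_antisymm (iSup_le fun b ↦ ?_) (le_iSup (E.relEntropy l) α)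
  obtain ⟨m, hm⟩ := hgen b
  exact EntropySpace.relEntropy_le_of_orbitProd_prec hmeet hmono (fun a b ↦ (hm1 a b).2) hm
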